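/- If u, v ∈ 𝒜₂ and w ∈ 𝒜₀, then there is a constant c_* ≥ 1, depending only on the C²-norms ‖u‖₂, ‖v‖₂, ‖w‖₂ (and independent of α₀, H₁, H₂), such that ‖∂^α(uvw)‖₀ ≤ c_* H₁^{α₁} H₂^{α₂} [(|α|−1)!]^s for every α = (α₁,α₂) ≤ α₀ with |α| ≥ 1 (i.e. c_*^{−1} uvw ∈ 𝒜₀). -/

import Mathlib

/-!
By the Leibniz rule and Vandermonde's identity, a derivative of order `n` of a product `f * g` whose
factors satisfy bounds with factorials `(k - 2)!` and `(k - 1)!` is controlled by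
`∑ k ≤ n, C(n, k) (k - 2)! (n - k - 1)!`. Relative to `(n - 1)!` the `k`-th term is of size
`1 / (k + 1) ^ 2 + 1 / (n + 1)`, so the sum is `O((n - 1)!)` uniformly in `n`: multiplying by a
factor of type `(k - 2)!` preserves the type `(k - 1)!`. Apply this first to `v * w`, then to
`u * (v * w)`.
-/

open Set

noncomputable section

/-- The closed strip `R̄ = ℝ × [p₀, 0]`. -/
def Strip (p₀ : ℝ) : Set (ℝ × ℝ) := {z : ℝ × ℝ | p₀ ≤ z.2 ∧ z.2 ≤ 0}

/-- The mixed partial derivative `∂_q^a ∂_p^b f` of `f : ℝ² → ℝ` within the set `S`,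
realized as the iterated Fréchet derivative within `S` applied to the corresponding
coordinate directions. -/
def mpw (S : Set (ℝ × ℝ)) (a b : ℕ) (f : ℝ × ℝ → ℝ) (z : ℝ × ℝ) : ℝ :=
  iteratedFDerivWithin ℝ (a + b) f S z
    (fun i => if (i : ℕ) < a then ((1 : ℝ), (0 : ℝ)) else ((0 : ℝ), (1 : ℝ)))

/-- `∂_q^a ∂_p^b f` within the strip `R̄`. -/
def pd (p₀ : ℝ) (a b : ℕ) (f : ℝ × ℝ → ℝ) : ℝ × ℝ → ℝ := mpw (Strip p₀) a b f

/-- Euclidean distance on `ℝ²`. -/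
def edist2 (z z' : ℝ × ℝ) : ℝ := Real.sqrt ((z.1 - z'.1) ^ 2 + (z.2 - z'.2) ^ 2)

/-- `sup_{R̄} |f|`. -/
def supS (p₀ : ℝ) (f : ℝ × ℝ → ℝ) : ℝ := sSup ((fun z => |f z|) '' Strip p₀)

/-- The Hölder seminorm of exponent `μ` of `f` over the strip `R̄`. -/
def hsemi (p₀ μ : ℝ) (f : ℝ × ℝ → ℝ) : ℝ :=
  sSup {y | ∃ z ∈ Strip p₀, ∃ z' ∈ Strip p₀, z ≠ z' ∧ y = |f z - f z'| / (edist2 z z') ^ μ}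

/-- The `C^k` sup-norm `‖f‖_k = Σ_{|α| ≤ k} sup_{R̄} |∂^α f|`. -/
def cknorm (p₀ : ℝ) (k : ℕ) (f : ℝ × ℝ → ℝ) : ℝ :=
  ∑ a ∈ Finset.range (k + 1), ∑ b ∈ Finset.range (k + 1 - a), supS p₀ (pd p₀ a b f)

/-- The Hölder norm `‖f‖_{k,μ} = ‖f‖_k + max_{|α| = k} [∂^α f]_μ`. -/
def hnorm (p₀ μ : ℝ) (k : ℕ) (f : ℝ × ℝ → ℝ) : ℝ :=
  cknorm p₀ k f + sSup {y | ∃ a b : ℕ, a + b = k ∧ y = hsemi p₀ μ (pd p₀ a b f)}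

/-- Boundedness of `f` on the strip (finiteness of `sup_{R̄} |f|`). -/
def bddS (p₀ : ℝ) (f : ℝ × ℝ → ℝ) : Prop := BddAbove ((fun z => |f z|) '' Strip p₀)

/-- Finiteness of the Hölder seminorm of `f` on the strip. -/
def bddH (p₀ μ : ℝ) (f : ℝ × ℝ → ℝ) : Prop :=
  BddAbove {y | ∃ z ∈ Strip p₀, ∃ z' ∈ Strip p₀, z ≠ z' ∧ y = |f z - f z'| / (edist2 z z') ^ μ}

/-- Finiteness of the `C^{k,μ}(R̄)` norm. -/
def finCk (p₀ μ : ℝ) (k : ℕ) (f : ℝ × ℝ → ℝ) : Prop :=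
  (∀ a b : ℕ, a + b ≤ k → bddS p₀ (pd p₀ a b f)) ∧
  (∀ a b : ℕ, a + b = k → bddH p₀ μ (pd p₀ a b f))

/-- Membership in `C^{k,μ}(R̄)`: `k` times continuously differentiable on the strip with
bounded derivatives, the top-order ones Hölder continuous of exponent `μ`. -/
def MemCk (p₀ μ : ℝ) (k : ℕ) (f : ℝ × ℝ → ℝ) : Prop :=
  ContDiffOn ℝ k f (Strip p₀) ∧ finCk p₀ μ k f

/-- The class `𝒜_j`: functions `f ∈ C^{|α₀|,μ}(R̄)` such that
`‖∂^α f‖₀ ≤ H₁^{α₁−j} H₂^{α₂} [(|α|−j−1)!]^s` for every `α ≤ α₀` with `|α| ≥ j+1`. -/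
def memA (p₀ μ s H₁ H₂ : ℝ) (α₀ : ℕ × ℕ) (j : ℕ) (f : ℝ × ℝ → ℝ) : Prop :=
  MemCk p₀ μ (α₀.1 + α₀.2) f ∧
  ∀ a b : ℕ, a ≤ α₀.1 → b ≤ α₀.2 → j + 1 ≤ a + b →
    ∀ z ∈ Strip p₀, |pd p₀ a b f z| ≤
      H₁ ^ ((a : ℤ) - (j : ℤ)) * H₂ ^ b * (Nat.factorial (a + b - (j + 1)) : ℝ) ^ s

section LeibnizRule

open Finset.HasAntidiagonal (antidiagonal mem_antidiagonal)

variable {𝕜 E 𝔸 : Type*} [NontriviallyNormedField 𝕜] [NormedAddCommGroup E] [NormedSpace 𝕜 E]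
  [NormedCommRing 𝔸] [NormedAlgebra 𝕜 𝔸] {S : Set E} {e : E} {n : ℕ} {F G : ℕ → E → 𝔸}

variable (𝕜) in
/-- `F 0, F 1, …, F n` are successive directional derivatives along `e` within `S`. Working with
such sequences separates the Leibniz rule from the way the derivatives are constructed. -/
def IsDerivTower (S : Set E) (e : E) (n : ℕ) (F : ℕ → E → 𝔸) : Prop :=
  ∀ m < n, ∀ z ∈ S, DifferentiableWithinAt 𝕜 (F m) S z ∧ fderivWithin 𝕜 (F m) S z e = F (m + 1) z

theorem IsDerivTower.eqOn (hF : IsDerivTower 𝕜 S e n F) (hG : IsDerivTower 𝕜 S e n G)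
    (h₀ : EqOn (F 0) (G 0) S) {m : ℕ} (hm : m ≤ n) : EqOn (F m) (G m) S := by
  induction m with
  | zero => exact h₀
  | succ m ih =>
    intro z hz
    rw [← (hF m hm z hz).2, ← (hG m hm z hz).2, fderivWithin_congr' (ih (by lia)) hz]

theorem IsDerivTower.sum_const_mul {ι : Type*} {t : Finset ι} {F : ι → ℕ → E → 𝔸}
    (hS : UniqueDiffOn 𝕜 S) (c : ι → 𝔸) (hF : ∀ i ∈ t, IsDerivTower 𝕜 S e n (F i)) :
    IsDerivTower 𝕜 S e n fun m z => ∑ i ∈ t, c i * F i m z := by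
  intro m hm z hz
  have hd : ∀ i ∈ t, DifferentiableWithinAt 𝕜 (F i m) S z := fun i hi => (hF i hi m hm z hz).1
  have hcd : ∀ i ∈ t, DifferentiableWithinAt 𝕜 (fun y => c i * F i m y) S z :=
    fun i hi => (hd i hi).const_mul (c i)
  refine ⟨DifferentiableWithinAt.fun_sum hcd, ?_⟩
  rw [fderivWithin_fun_sum (hS z hz) hcd, sum_apply]
  refine Finset.sum_congr rfl fun i hi => ?_
  rw [fderivWithin_const_mul (hS z hz) (hd i hi), smul_apply, smul_eq_mul,
    (hF i hi m hm z hz).2]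

theorem sum_antidiagonal_choose_succ_mul_add {R : Type*} [CommSemiring R] (f : ℕ → ℕ → R)
    (m : ℕ) :
    ∑ p ∈ antidiagonal (m + 1), ((m + 1).choose p.1 : R) * f p.1 p.2 =
      ∑ p ∈ antidiagonal m, (m.choose p.1 : R) * (f p.1 (p.2 + 1) + f (p.1 + 1) p.2) := by
  rw [Finset.sum_antidiagonal_choose_succ_mul, ← Finset.sum_add_distrib]
  refine Finset.sum_congr rfl fun p hp => ?_
  rw [Nat.choose_symm_of_eq_add (mem_antidiagonal.1 hp).symm, mul_add]

theorem IsDerivTower.leibniz (hS : UniqueDiffOn 𝕜 S) (hF : IsDerivTower 𝕜 S e n F)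
    (hG : IsDerivTower 𝕜 S e n G) :
    IsDerivTower 𝕜 S e n fun m z =>
      ∑ p ∈ antidiagonal m, (m.choose p.1 : 𝔸) * (F p.1 z * G p.2 z) := by
  intro m hm z hz
  have hF' : ∀ p ∈ antidiagonal m, DifferentiableWithinAt 𝕜 (F p.1) S z ∧
      fderivWithin 𝕜 (F p.1) S z e = F (p.1 + 1) z := fun p hp =>
    hF p.1 (by have := mem_antidiagonal.1 hp; lia) z hz
  have hG' : ∀ p ∈ antidiagonal m, DifferentiableWithinAt 𝕜 (G p.2) S z ∧
      fderivWithin 𝕜 (G p.2) S z e = G (p.2 + 1) z := fun p hp =>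
    hG p.2 (by have := mem_antidiagonal.1 hp; lia) z hz
  have hd : ∀ p ∈ antidiagonal m, DifferentiableWithinAt 𝕜
      (fun y => (m.choose p.1 : 𝔸) * (F p.1 y * G p.2 y)) S z := fun p hp =>
    ((hF' p hp).1.fun_mul (hG' p hp).1).const_mul _
  refine ⟨DifferentiableWithinAt.fun_sum hd, ?_⟩
  simp only [fderivWithin_fun_sum (hS z hz) hd, sum_apply,
    sum_antidiagonal_choose_succ_mul_add fun i j => F i z * G j z]
  refine Finset.sum_congr rfl fun p hp => ?_
  rw [fderivWithin_const_mul (hS z hz) ((hF' p hp).1.fun_mul (hG' p hp).1),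
    fderivWithin_fun_mul (hS z hz) (hF' p hp).1 (hG' p hp).1]
  simp only [smul_apply, add_apply, smul_eq_mul,
    (hF' p hp).2, (hG' p hp).2, mul_comm (G p.2 z)]

end LeibnizRule

section MixedPartials

open Finset.HasAntidiagonal (antidiagonal mem_antidiagonal)

variable {S : Set (ℝ × ℝ)} {f g : ℝ × ℝ → ℝ} {a b n : ℕ}

theorem mpw_zero_zero (S : Set (ℝ × ℝ)) (f : ℝ × ℝ → ℝ) : mpw S 0 0 f = f :=
  funext fun _ => iteratedFDerivWithin_zero_apply _

theorem iteratedFDerivWithin_apply_congr_order {𝕜 E F : Type*} [NontriviallyNormedField 𝕜]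
    [NormedAddCommGroup E] [NormedSpace 𝕜 E] [NormedAddCommGroup F] [NormedSpace 𝕜 F]
    {m n : ℕ} (h : m = n) (f : E → F) (S : Set E) (z : E) (v : ℕ → E) :
    iteratedFDerivWithin 𝕜 m f S z (fun i => v i) =
      iteratedFDerivWithin 𝕜 n f S z (fun i => v i) := by
  subst h
  rfl

theorem differentiableWithinAt_mpw (hS : UniqueDiffOn ℝ S) (hf : ContDiffOn ℝ n f S)
    (hab : a + b < n) {z : ℝ × ℝ} (hz : z ∈ S) : DifferentiableWithinAt ℝ (mpw S a b f) S z :=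
  have hd := hf.differentiableOn_iteratedFDerivWithin (mod_cast hab) hS z hz
  hd.continuousMultilinear_apply_const _

theorem fderivWithin_mpw_apply (hS : UniqueDiffOn ℝ S) (hf : ContDiffOn ℝ n f S)
    (hab : a + b < n) {z : ℝ × ℝ} (hz : z ∈ S) (e : ℝ × ℝ) :
    fderivWithin ℝ (mpw S a b f) S z e = iteratedFDerivWithin ℝ (a + b + 1) f S z
      (Fin.cons e fun i : Fin (a + b) => if (i : ℕ) < a then ((1 : ℝ), (0 : ℝ)) else (0, 1)) := by
  rw [iteratedFDerivWithin_succ_apply_left, Fin.cons_zero, Fin.tail_cons]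
  exact fderivWithin_continuousMultilinear_apply_const_apply (hS z hz)
    (hf.differentiableOn_iteratedFDerivWithin (mod_cast hab) hS z hz) _ e

theorem isDerivTower_mpw_fst (hS : UniqueDiffOn ℝ S) (hf : ContDiffOn ℝ n f S) (hab : a + b ≤ n) :
    IsDerivTower ℝ S (1, 0) a fun i => mpw S i b f := by
  intro i hi z hz
  refine ⟨differentiableWithinAt_mpw hS hf (by lia) hz, ?_⟩
  rw [fderivWithin_mpw_apply hS hf (by lia) hz]
  refine Eq.trans ?_ (iteratedFDerivWithin_apply_congr_order (show i + b + 1 = i + 1 + b by lia)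
    f S z fun k => if k < i + 1 then (1, 0) else (0, 1))
  congr 1
  ext k : 1
  cases k using Fin.cases <;> simp

theorem isDerivTower_mpw_snd (hS : UniqueDiffOn ℝ S) (hf : ContDiffOn ℝ n f S) (hb : b ≤ n) :
    IsDerivTower ℝ S (0, 1) b fun j => mpw S 0 j f := by
  intro j hj z hz
  refine ⟨differentiableWithinAt_mpw hS hf (by lia) hz, ?_⟩
  rw [fderivWithin_mpw_apply hS hf (by lia) hz]
  change _ = iteratedFDerivWithin ℝ (0 + j + 1) f S z _
  congr 1
  ext k : 1
  cases k using Fin.cases <;> simp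

theorem mpw_mul (hS : UniqueDiffOn ℝ S) (hf : ContDiffOn ℝ n f S) (hg : ContDiffOn ℝ n g S)
    (hab : a + b ≤ n) {z : ℝ × ℝ} (hz : z ∈ S) :
    mpw S a b (fun y => f y * g y) z = ∑ q ∈ antidiagonal b, (b.choose q.1 : ℝ) *
      ∑ p ∈ antidiagonal a, (a.choose p.1 : ℝ) * (mpw S p.1 q.1 f z * mpw S p.2 q.2 g z) := by
  have snd_leibniz : EqOn (mpw S 0 b fun y => f y * g y) (fun z => ∑ q ∈ antidiagonal b,
      (b.choose q.1 : ℝ) * (mpw S 0 q.1 f z * mpw S 0 q.2 g z)) S :=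
    (isDerivTower_mpw_snd hS (hf.mul hg) (by lia)).eqOn
      ((isDerivTower_mpw_snd hS hf (by lia)).leibniz hS (isDerivTower_mpw_snd hS hg (by lia)))
      (fun z _ => by simp [mpw_zero_zero]) le_rfl
  have fst_tower : IsDerivTower ℝ S (1, 0) a fun i z => ∑ q ∈ antidiagonal b,
      (b.choose q.1 : ℝ) * ∑ p ∈ antidiagonal i,
        (i.choose p.1 : ℝ) * (mpw S p.1 q.1 f z * mpw S p.2 q.2 g z) := by
    refine IsDerivTower.sum_const_mul hS _ fun q hq => ?_
    have hq := mem_antidiagonal.1 hq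
    exact (isDerivTower_mpw_fst hS hf (by lia)).leibniz hS (isDerivTower_mpw_fst hS hg (by lia))
  exact (isDerivTower_mpw_fst hS (hf.mul hg) hab).eqOn fst_tower
    (fun z hz => by simpa using snd_leibniz hz) le_rfl hz

end MixedPartials

section FactorialSums

open Finset.HasAntidiagonal (antidiagonal mem_antidiagonal)
open scoped Nat

theorem sum_antidiagonal_choose_mul_sum_antidiagonal_choose {R : Type*} [CommSemiring R]
    (a b : ℕ) (F : ℕ → ℕ → R) :
    ∑ q ∈ antidiagonal b, (b.choose q.1 : R) *
        ∑ p ∈ antidiagonal a, (a.choose p.1 : R) * F (p.1 + q.1) (p.2 + q.2) =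
      ∑ k ∈ antidiagonal (a + b), ((a + b).choose k.1 : R) * F k.1 k.2 := by
  induction b generalizing F with
  | zero => simp
  | succ b ih =>
    rw [← add_assoc, sum_antidiagonal_choose_succ_mul_add F,
      ← ih fun i j => F i (j + 1) + F (i + 1) j,
      sum_antidiagonal_choose_succ_mul_add fun i j =>
        ∑ p ∈ antidiagonal a, (a.choose p.1 : R) * F (p.1 + i) (p.2 + j)]
    simp only [mul_add, Finset.sum_add_distrib, add_assoc]

theorem sq_succ_mul_factorial_sub_two_le (k : ℕ) : (k + 1) ^ 2 * (k - 2)! ≤ 5 * k ! := by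
  rcases k with _ | _ | k
  · simp
  · simp
  · calc (k + 2 + 1) ^ 2 * k ! ≤ 5 * ((k + 2) * (k + 1)) * k ! := by gcongr; nlinarith
      _ = 5 * (k + 2)! := by simp only [Nat.factorial_succ]; ring

theorem succ_mul_factorial_pred_le (m : ℕ) : (m + 1) * (m - 1)! ≤ 2 * m ! := by
  rcases m with _ | m
  · simp
  · calc (m + 1 + 1) * m ! ≤ 2 * (m + 1) * m ! := by gcongr; lia
      _ = 2 * (m + 1)! := by rw [Nat.factorial_succ]; ring

theorem factorial_le_succ_mul_factorial_pred (n : ℕ) : n ! ≤ (n + 1) * (n - 1)! := by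
  rcases n with _ | n
  · simp
  · rw [Nat.factorial_succ, Nat.add_sub_cancel]
    gcongr
    lia

theorem factorial_sub_two_mul_factorial_pred_le (k m : ℕ) :
    (k - 2)! * (m - 1)! ≤ (k + m - 1)! :=
  calc (k - 2)! * (m - 1)! ≤ (k - 2 + (m - 1))! :=
        Nat.le_of_dvd (Nat.factorial_pos _) (Nat.factorial_mul_factorial_dvd_factorial_add _ _)
    _ ≤ (k + m - 1)! := Nat.factorial_le (by lia)

theorem succ_div_sq_succ_mul_succ_le {k m : ℝ} (hk : 0 ≤ k) (hm : 0 ≤ m) :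
    (k + m + 1) / ((k + 1) ^ 2 * (m + 1)) ≤ 1 / (k + 1) ^ 2 + 1 / (k + m + 1) := by
  have split : (k + m + 1) / ((k + 1) ^ 2 * (m + 1)) ≤
      1 / (k + 1) ^ 2 + 1 / ((k + 1) * (m + 1)) := by
    rw [div_add_div _ _ (by positivity) (by positivity),
      div_le_div_iff₀ (by positivity) (by positivity)]
    nlinarith [show 0 ≤ (k + 1) ^ 3 * (m + 1) by positivity]
  exact split.trans (by gcongr; nlinarith)

theorem choose_mul_factorial_sub_two_mul_factorial_pred_le (k m : ℕ) :
    ((k + m).choose k : ℝ) * ((k - 2)! * (m - 1)!) ≤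
      10 * (1 / ((k : ℝ) + 1) ^ 2 + 1 / ((k + m : ℕ) + 1)) * (k + m - 1)! := by
  have hk : ((k - 2)! : ℝ) ≤ 5 * k ! / (k + 1) ^ 2 := by
    rw [le_div_iff₀' (by positivity)]
    exact_mod_cast sq_succ_mul_factorial_sub_two_le k
  have hm : ((m - 1)! : ℝ) ≤ 2 * m ! / (m + 1) := by
    rw [le_div_iff₀' (by positivity)]
    exact_mod_cast succ_mul_factorial_pred_le m
  have hchoose : ((k + m).choose k : ℝ) * k ! * m ! = (k + m)! := by
    rw [Nat.choose_symm_add]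
    exact_mod_cast Nat.add_choose_mul_factorial_mul_factorial k m
  have hn : ((k + m)! : ℝ) ≤ (k + m + 1) * (k + m - 1)! := by
    exact_mod_cast factorial_le_succ_mul_factorial_pred (k + m)
  calc ((k + m).choose k : ℝ) * ((k - 2)! * (m - 1)!)
      ≤ (k + m).choose k * (5 * k ! / (k + 1) ^ 2 * (2 * m ! / (m + 1))) := by gcongr
    _ = 10 / ((k + 1) ^ 2 * (m + 1)) * (k + m)! := by rw [← hchoose]; field_simp; ring
    _ ≤ 10 / ((k + 1) ^ 2 * (m + 1)) * ((k + m + 1) * (k + m - 1)!) := by gcongr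
    _ = 10 * ((k + m + 1) / ((k + 1) ^ 2 * (m + 1))) * (k + m - 1)! := by ring
    _ ≤ 10 * (1 / ((k : ℝ) + 1) ^ 2 + 1 / ((k + m : ℕ) + 1)) * (k + m - 1)! := by
      push_cast
      gcongr
      exact succ_div_sq_succ_mul_succ_le k.cast_nonneg m.cast_nonneg

theorem mul_rpow_le_mul_rpow_of_mul_le_mul {c w x y s : ℝ} (hc : 0 ≤ c) (hx : 0 < x) (hxy : x ≤ y)
    (hcx : c * x ≤ w * y) (hs : 1 ≤ s) : c * x ^ s ≤ w * y ^ s := by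
  have rpow_eq_mul : ∀ t : ℝ, 0 < t → t ^ s = t * t ^ (s - 1) := fun t ht => by
    rw [Real.rpow_sub_one ht.ne', mul_div_cancel₀ _ ht.ne']
  calc c * x ^ s = c * x * x ^ (s - 1) := by rw [rpow_eq_mul x hx, mul_assoc]
    _ ≤ c * x * y ^ (s - 1) := by gcongr
    _ ≤ w * y * y ^ (s - 1) := by
      have := hx.trans_le hxy
      gcongr
    _ = w * y ^ s := by rw [rpow_eq_mul y (hx.trans_le hxy), mul_assoc]

theorem sum_range_one_div_sq_succ_le (n : ℕ) :
    ∑ k ∈ Finset.range n, 1 / ((k : ℝ) + 1) ^ 2 ≤ 2 := by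
  calc ∑ k ∈ Finset.range n, 1 / ((k : ℝ) + 1) ^ 2
      = ∑ k ∈ Finset.Ico (0 + 1) (n + 1), ((k : ℝ) ^ 2)⁻¹ := by
        rw [Finset.range_eq_Ico, ← Finset.sum_Ico_add' (fun k : ℕ => ((k : ℝ) ^ 2)⁻¹) 0 n 1]
        simp only [Nat.cast_succ, one_div]
    _ ≤ 2 / ((0 : ℕ) + 1) := sum_Ioo_inv_sq_le 0 (n + 1)
    _ = 2 := by norm_num

theorem sum_choose_mul_factorial_rpow_mul_factorial_rpow_le {s : ℝ} (hs : 1 ≤ s) (n : ℕ) :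
    ∑ p ∈ antidiagonal n, (n.choose p.1 : ℝ) * (((p.1 - 2)! : ℝ) ^ s * ((p.2 - 1)! : ℝ) ^ s) ≤
      30 * ((n - 1)! : ℝ) ^ s := by
  have term_le : ∀ p ∈ antidiagonal n,
      (n.choose p.1 : ℝ) * (((p.1 - 2)! : ℝ) ^ s * ((p.2 - 1)! : ℝ) ^ s) ≤
        10 * (1 / ((p.1 : ℝ) + 1) ^ 2 + 1 / ((n : ℝ) + 1)) * ((n - 1)! : ℝ) ^ s := by
    intro p hp
    obtain rfl := mem_antidiagonal.1 hp
    rw [← Real.mul_rpow (by positivity) (by positivity)]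
    exact mul_rpow_le_mul_rpow_of_mul_le_mul (by positivity) (by positivity)
      (mod_cast factorial_sub_two_mul_factorial_pred_le p.1 p.2)
      (choose_mul_factorial_sub_two_mul_factorial_pred_le p.1 p.2) hs
  have weights_le : ∑ p ∈ antidiagonal n, (1 / ((p.1 : ℝ) + 1) ^ 2 + 1 / ((n : ℝ) + 1)) ≤ 3 := by
    rw [Finset.Nat.sum_antidiagonal_eq_sum_range_succ_mk, Finset.sum_add_distrib,
      Finset.sum_const, Finset.card_range, nsmul_eq_mul, Nat.cast_succ,
      mul_one_div_cancel (by positivity)]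
    linarith [sum_range_one_div_sq_succ_le (n + 1)]
  calc _ ≤ _ := Finset.sum_le_sum term_le
    _ = 10 * (∑ p ∈ antidiagonal n, (1 / ((p.1 : ℝ) + 1) ^ 2 + 1 / ((n : ℝ) + 1))) *
        ((n - 1)! : ℝ) ^ s := by rw [← Finset.sum_mul, ← Finset.mul_sum]
    _ ≤ 10 * 3 * ((n - 1)! : ℝ) ^ s := by gcongr
    _ = 30 * ((n - 1)! : ℝ) ^ s := by norm_num

end FactorialSums

section GevreyBounds

open Finset.HasAntidiagonal (antidiagonal mem_antidiagonal)
open scoped Nat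

/-- Gevrey-type bounds of order `s` on the mixed partials `∂_q^a ∂_p^b f`, `a ≤ A`, `b ≤ B`, within
`S`, with constant `M` and factorials shifted by `r`. Truncated subtraction implements the
convention `m! = 1` for `m ≤ 0`. -/
def GevreyBound (S : Set (ℝ × ℝ)) (s H₁ H₂ : ℝ) (A B r : ℕ) (M : ℝ) (f : ℝ × ℝ → ℝ) : Prop :=
  ∀ a b : ℕ, a ≤ A → b ≤ B → ∀ z ∈ S,
    |mpw S a b f z| ≤ M * (H₁ ^ a * H₂ ^ b * ((a + b - r)! : ℝ) ^ s)

variable {S : Set (ℝ × ℝ)} {s H₁ H₂ M M' : ℝ} {A B r : ℕ} {f g : ℝ × ℝ → ℝ}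

theorem GevreyBound.abs_le (hf : GevreyBound S s H₁ H₂ A B r M f) {z : ℝ × ℝ} (hz : z ∈ S) :
    |f z| ≤ M := by
  simpa [mpw_zero_zero] using hf 0 0 A.zero_le B.zero_le z hz

theorem abs_sum_choose_mul_sum_choose_mul_le (a b : ℕ) (F : ℕ × ℕ → ℕ × ℕ → ℝ) :
    |∑ q ∈ antidiagonal b, (b.choose q.1 : ℝ) *
        ∑ p ∈ antidiagonal a, (a.choose p.1 : ℝ) * F p q| ≤
      ∑ q ∈ antidiagonal b, (b.choose q.1 : ℝ) *
        ∑ p ∈ antidiagonal a, (a.choose p.1 : ℝ) * |F p q| := by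
  refine (Finset.abs_sum_le_sum_abs _ _).trans (Finset.sum_le_sum fun q _ => ?_)
  rw [abs_mul, Nat.abs_cast]
  gcongr
  refine (Finset.abs_sum_le_sum_abs _ _).trans_eq (Finset.sum_congr rfl fun p _ => ?_)
  rw [abs_mul, Nat.abs_cast]

theorem GevreyBound.mul (hS : UniqueDiffOn ℝ S) (hs : 1 ≤ s) (hH₁ : 0 ≤ H₁) (hH₂ : 0 ≤ H₂)
    (hf : ContDiffOn ℝ (A + B : ℕ) f S) (hg : ContDiffOn ℝ (A + B : ℕ) g S)
    (bf : GevreyBound S s H₁ H₂ A B 2 M f) (bg : GevreyBound S s H₁ H₂ A B 1 M' g) :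
    GevreyBound S s H₁ H₂ A B 1 (30 * M * M') fun y => f y * g y := by
  intro a b ha hb z hz
  have hM : 0 ≤ M := (abs_nonneg _).trans (bf.abs_le hz)
  have hM' : 0 ≤ M' := (abs_nonneg _).trans (bg.abs_le hz)
  have term_le : ∀ q ∈ antidiagonal b, ∀ p ∈ antidiagonal a,
      |mpw S p.1 q.1 f z * mpw S p.2 q.2 g z| ≤ M * M' * (H₁ ^ a * H₂ ^ b) *
        (((p.1 + q.1 - 2)! : ℝ) ^ s * ((p.2 + q.2 - 1)! : ℝ) ^ s) := by
    intro q hq p hp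
    obtain rfl := mem_antidiagonal.1 hq
    obtain rfl := mem_antidiagonal.1 hp
    rw [abs_mul]
    exact (mul_le_mul (bf p.1 q.1 (by lia) (by lia) z hz) (bg p.2 q.2 (by lia) (by lia) z hz)
      (abs_nonneg _) (by positivity)).trans_eq (by ring)
  calc |mpw S a b (fun y => f y * g y) z|
      ≤ ∑ q ∈ antidiagonal b, (b.choose q.1 : ℝ) * ∑ p ∈ antidiagonal a,
          (a.choose p.1 : ℝ) * |mpw S p.1 q.1 f z * mpw S p.2 q.2 g z| := by
        rw [mpw_mul hS hf hg (by lia) hz]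
        exact abs_sum_choose_mul_sum_choose_mul_le a b _
    _ ≤ ∑ q ∈ antidiagonal b, (b.choose q.1 : ℝ) * ∑ p ∈ antidiagonal a, (a.choose p.1 : ℝ) *
          (M * M' * (H₁ ^ a * H₂ ^ b) *
            (((p.1 + q.1 - 2)! : ℝ) ^ s * ((p.2 + q.2 - 1)! : ℝ) ^ s)) := by
        gcongr with q hq p hp
        exact term_le q hq p hp
    _ = M * M' * (H₁ ^ a * H₂ ^ b) * ∑ k ∈ antidiagonal (a + b), ((a + b).choose k.1 : ℝ) *
          (((k.1 - 2)! : ℝ) ^ s * ((k.2 - 1)! : ℝ) ^ s) := by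
        rw [sum_antidiagonal_choose_mul_sum_antidiagonal_choose a b fun i j =>
            M * M' * (H₁ ^ a * H₂ ^ b) * (((i - 2)! : ℝ) ^ s * ((j - 1)! : ℝ) ^ s),
          Finset.mul_sum]
        simp only [mul_left_comm]
    _ ≤ M * M' * (H₁ ^ a * H₂ ^ b) * (30 * ((a + b - 1)! : ℝ) ^ s) := by
        gcongr
        exact sum_choose_mul_factorial_rpow_mul_factorial_rpow_le hs (a + b)
    _ = 30 * M * M' * (H₁ ^ a * H₂ ^ b * ((a + b - 1)! : ℝ) ^ s) := by ring

end GevreyBounds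

section Strip

open scoped Nat

variable {p₀ μ s H₁ H₂ K : ℝ} {α₀ : ℕ × ℕ} {m j : ℕ} {f : ℝ × ℝ → ℝ}

theorem uniqueDiffOn_Strip (hp₀ : p₀ < 0) : UniqueDiffOn ℝ (Strip p₀) := by
  have strip_eq_prod : Strip p₀ = univ ×ˢ Icc p₀ 0 := by
    ext z
    simp [Strip]
  rw [strip_eq_prod]
  exact uniqueDiffOn_univ.prod (uniqueDiffOn_Icc hp₀)

theorem supS_nonneg (p₀ : ℝ) (f : ℝ × ℝ → ℝ) : 0 ≤ supS p₀ f :=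
  Real.sSup_nonneg (forall_mem_image.2 fun _ _ => abs_nonneg _)

theorem abs_pd_le_cknorm {a b : ℕ} (hab : a + b ≤ m) (hf : bddS p₀ (pd p₀ a b f)) {z : ℝ × ℝ}
    (hz : z ∈ Strip p₀) : |pd p₀ a b f z| ≤ cknorm p₀ m f :=
  calc |pd p₀ a b f z| ≤ supS p₀ (pd p₀ a b f) := le_csSup hf (mem_image_of_mem _ hz)
    _ ≤ ∑ b ∈ Finset.range (m + 1 - a), supS p₀ (pd p₀ a b f) :=
      Finset.single_le_sum (f := fun b => supS p₀ (pd p₀ a b f)) (fun _ _ => supS_nonneg _ _)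
        (Finset.mem_range.2 (by lia))
    _ ≤ cknorm p₀ m f :=
      Finset.single_le_sum
        (f := fun a => ∑ b ∈ Finset.range (m + 1 - a), supS p₀ (pd p₀ a b f))
        (fun _ _ => Finset.sum_nonneg fun _ _ => supS_nonneg _ _) (Finset.mem_range.2 (by lia))

theorem memA.gevreyBound (hf : memA p₀ μ s H₁ H₂ α₀ j f) (hs : 0 ≤ s) (hH₁ : 1 ≤ H₁)
    (hH₂ : 1 ≤ H₂) (hj : j ≤ m) (hK : cknorm p₀ m f ≤ K) {r : ℕ} (hr : r ≤ j + 1) :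
    GevreyBound (Strip p₀) s H₁ H₂ α₀.1 α₀.2 r (max K 1) f := by
  intro a b ha hb z hz
  change |pd p₀ a b f z| ≤ _
  rcases Nat.lt_or_ge (a + b) (j + 1) with low | high
  · have one_le_weight : 1 ≤ H₁ ^ a * H₂ ^ b * ((a + b - r)! : ℝ) ^ s :=
      one_le_mul_of_one_le_of_one_le
        (one_le_mul_of_one_le_of_one_le (one_le_pow₀ hH₁) (one_le_pow₀ hH₂))
        (Real.one_le_rpow (mod_cast Nat.factorial_pos _) hs)
    calc |pd p₀ a b f z| ≤ cknorm p₀ m f :=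
          abs_pd_le_cknorm (by lia) (hf.1.2.1 a b (by lia)) hz
      _ ≤ max K 1 := hK.trans (le_max_left K 1)
      _ ≤ _ := le_mul_of_one_le_right (by positivity) one_le_weight
  · have zpow_le : H₁ ^ ((a : ℤ) - j) ≤ H₁ ^ a := by
      rw [← zpow_natCast]
      exact zpow_le_zpow_right₀ hH₁ (by lia)
    calc |pd p₀ a b f z|
        ≤ H₁ ^ ((a : ℤ) - j) * H₂ ^ b * ((a + b - (j + 1))! : ℝ) ^ s := hf.2 a b ha hb high z hz
      _ ≤ H₁ ^ a * H₂ ^ b * ((a + b - r)! : ℝ) ^ s := by gcongr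
      _ ≤ _ := le_mul_of_one_le_left (by positivity) (le_max_right K 1)

theorem memA_two_two_zero_mul_general {i k : ℕ} {u v w : ℝ × ℝ → ℝ} (hp₀ : p₀ < 0) (hs : 1 ≤ s)
    (hH₁ : 1 ≤ H₁) (hH₂ : 1 ≤ H₂) (hi : i ∈ Icc 1 m) (hj : j ∈ Icc 1 m) (hk : k ≤ m)
    (hKu : cknorm p₀ m u ≤ K) (hKv : cknorm p₀ m v ≤ K) (hKw : cknorm p₀ m w ≤ K)
    (hu : memA p₀ μ s H₁ H₂ α₀ i u) (hv : memA p₀ μ s H₁ H₂ α₀ j v)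
    (hw : memA p₀ μ s H₁ H₂ α₀ k w) {a b : ℕ} (ha : a ≤ α₀.1) (hb : b ≤ α₀.2) {z : ℝ × ℝ}
    (hz : z ∈ Strip p₀) :
    |pd p₀ a b (fun y => u y * v y * w y) z| ≤
      900 * max K 1 ^ 3 * H₁ ^ a * H₂ ^ b * ((a + b - 1)! : ℝ) ^ s := by
  have hs₀ : 0 ≤ s := by linarith
  have hS := uniqueDiffOn_Strip hp₀
  have bu := hu.gevreyBound hs₀ hH₁ hH₂ hi.2 hKu (r := 2) (Nat.succ_le_succ hi.1)
  have bv := hv.gevreyBound hs₀ hH₁ hH₂ hj.2 hKv (r := 2) (Nat.succ_le_succ hj.1)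
  have bw := hw.gevreyBound hs₀ hH₁ hH₂ hk hKw (r := 1) (by lia)
  have bvw := bv.mul hS hs (by linarith) (by linarith) hv.1.1 hw.1.1 bw
  have buvw := bu.mul hS hs (by linarith) (by linarith) hu.1.1 (hv.1.1.mul hw.1.1) bvw
  simp only [mul_assoc (u _)]
  exact (buvw a b ha hb z hz).trans_eq (by ring)

end Strip

/-- If `u, v ∈ 𝒜₂` and `w ∈ 𝒜₀` then `c_*⁻¹ uvw ∈ 𝒜₀` for a constant `c_*` depending only
on the `C²`-norms of `u, v, w` (and independent of `α₀, H₁, H₂`). -/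
theorem memA_two_two_zero_mul (p₀ μ s K : ℝ) (hp₀ : p₀ < 0) (hμ : μ ∈ Set.Ioo (0 : ℝ) 1)
    (hs : 1 ≤ s) :
    ∃ c : ℝ, 1 ≤ c ∧ ∀ (α₀ : ℕ × ℕ) (H₁ H₂ : ℝ) (u v w : ℝ × ℝ → ℝ),
      3 ≤ α₀.1 + α₀.2 → 1 ≤ H₁ → H₁ ≤ H₂ →
      cknorm p₀ 2 u ≤ K → cknorm p₀ 2 v ≤ K → cknorm p₀ 2 w ≤ K →
      memA p₀ μ s H₁ H₂ α₀ 2 u → memA p₀ μ s H₁ H₂ α₀ 2 v → memA p₀ μ s H₁ H₂ α₀ 0 w →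
      ∀ a b : ℕ, a ≤ α₀.1 → b ≤ α₀.2 → 1 ≤ a + b → ∀ z ∈ Strip p₀,
        |pd p₀ a b (fun y => u y * v y * w y) z| ≤
          c * H₁ ^ a * H₂ ^ b * (Nat.factorial (a + b - 1) : ℝ) ^ s := by
  have one_le_const : 1 ≤ 900 * max K 1 ^ 3 := by
    linarith [one_le_pow₀ (n := 3) (le_max_right K 1)]
  exact ⟨900 * max K 1 ^ 3, one_le_const, fun _ _ _ _ _ _ _ hH₁ hH hKu hKv hKw hu hv hw _ _ ha hb
    _ _ hz => memA_two_two_zero_mul_general hp₀ hs hH₁ (hH₁.trans hH) ⟨one_le_two, le_rfl⟩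
      ⟨one_le_two, le_rfl⟩ zero_le_two hKu hKv hKw hu hv hw ha hb hz⟩
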